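/- In U_3, the element Sc := [1,4,2,5,3,6] − (35/2)·([1,4,2,5] + [1,4,3,6] + [2,5,3,6]) + (259/2)·([1,4] + [2,5] + [3,6]) − 675/4 satisfies σ_a Sc + Sc σ_a = 0 for every a ∈ {1, 2, 3, 4, 5, 6}. (The Scasimir of U(osp(1|6)).) -/

import Mathlib

open scoped BigOperators TensorProduct
open Nat

noncomputable section

/-- The symplectic metric `g` of `osp(1|2n)` (0-indexed). -/
def gmat (n : ℕ) (a b : Fin (2*n)) : ℚ :=
  if (a:ℕ) < n ∧ (b:ℕ) = (a:ℕ) + n then -1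
  else if (b:ℕ) < n ∧ (a:ℕ) = (b:ℕ) + n then 1
  else 0

/-- The defining relations of `U(osp(1|2n))`:
`(σₐσ_b + σ_bσₐ)σ_c - σ_c(σₐσ_b + σ_bσₐ) = -g_{ac} σ_b - g_{bc} σₐ`. -/
inductive OspRel (n : ℕ) : FreeAlgebra ℚ (Fin (2*n)) → FreeAlgebra ℚ (Fin (2*n)) → Prop
  | rel (a b c : Fin (2*n)) : OspRel n
      ((FreeAlgebra.ι ℚ a * FreeAlgebra.ι ℚ b + FreeAlgebra.ι ℚ b * FreeAlgebra.ι ℚ a)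
          * FreeAlgebra.ι ℚ c)
      (FreeAlgebra.ι ℚ c *
          (FreeAlgebra.ι ℚ a * FreeAlgebra.ι ℚ b + FreeAlgebra.ι ℚ b * FreeAlgebra.ι ℚ a)
        - algebraMap ℚ (FreeAlgebra ℚ (Fin (2*n))) (gmat n a c) * FreeAlgebra.ι ℚ b
        - algebraMap ℚ (FreeAlgebra ℚ (Fin (2*n))) (gmat n b c) * FreeAlgebra.ι ℚ a)

/-- The universal enveloping superalgebra `U(osp(1|2n))`. -/
abbrev U (n : ℕ) := RingQuot (OspRel n)

/-- The fermionic generators `σₐ`. -/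
def σ (n : ℕ) (a : Fin (2*n)) : U n :=
  RingQuot.mkAlgHom ℚ (OspRel n) (FreeAlgebra.ι ℚ a)

/-- The bosonic generators `σ_{ab} = σₐσ_b + σ_bσₐ`. -/
def σσ (n : ℕ) (a b : Fin (2*n)) : U n := σ n a * σ n b + σ n b * σ n a

/-- The antisymmetrized monomial `[a₁ … a_p]`. -/
def brkt (n : ℕ) (p : ℕ) (a : Fin p → Fin (2*n)) : U n :=
  ∑ s : Equiv.Perm (Fin p),
    (Equiv.Perm.sign s : ℤ) • (List.ofFn fun i => σ n (a (s i))).prod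

/-- `Ω`, the span of all the antisymmetrized monomials. -/
def Omega (n : ℕ) : Submodule ℚ (U n) :=
  Submodule.span ℚ {x | ∃ p, ∃ a : Fin p → Fin (2*n), x = brkt n p a}


/-- The Scasimir of `U(osp(1|6))`:
`Sc = [1,4,2,5,3,6] − (35/2)([1,4,2,5]+[1,4,3,6]+[2,5,3,6]) + (259/2)([1,4]+[2,5]+[3,6]) − 675/4`
(0-indexed below). -/
def Sc3 : U 3 :=
  brkt 3 6 ![⟨0, by omega⟩, ⟨3, by omega⟩, ⟨1, by omega⟩, ⟨4, by omega⟩, ⟨2, by omega⟩,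
      ⟨5, by omega⟩]
  - ((35:ℚ)/2) • (brkt 3 4 ![⟨0, by omega⟩, ⟨3, by omega⟩, ⟨1, by omega⟩, ⟨4, by omega⟩]
      + brkt 3 4 ![⟨0, by omega⟩, ⟨3, by omega⟩, ⟨2, by omega⟩, ⟨5, by omega⟩]
      + brkt 3 4 ![⟨1, by omega⟩, ⟨4, by omega⟩, ⟨2, by omega⟩, ⟨5, by omega⟩])
  + ((259:ℚ)/2) • (brkt 3 2 ![⟨0, by omega⟩, ⟨3, by omega⟩]
      + brkt 3 2 ![⟨1, by omega⟩, ⟨4, by omega⟩]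
      + brkt 3 2 ![⟨2, by omega⟩, ⟨5, by omega⟩])
  - ((675:ℚ)/4) • 1

theorem anticomm_of_antiderivation {B : Type*} [Ring B] [Algebra ℚ B]
    (t w s T g : B) (D : B →ₗ[ℚ] B)
    (wt : Commute w t) (ws : Commute w s) (wg : Commute w g)
    (st : s * t + t * s = T) (Tt : T * t + t * T = w * s + g * t) (gt : g * t + t * g = 0)
    (D_one : D 1 = 0) (D_t : ∀ x, D (t * x) = s * x - t * D x)
    (D_w : ∀ x, D (w * x) = w * D x - 2 • (g * x))
    (h0 : t * t ^ 6 = 0) (h1 : t * (w * t ^ 4) = 0) (h2 : t * (w ^ 2 * t ^ 2) = 0)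
    (h3 : t * w ^ 3 = 0) :
    s * (t ^ 6 - (35 / 4 : ℚ) • (w * t ^ 4) + (259 / 16 : ℚ) • (w ^ 2 * t ^ 2)
        - (225 / 64 : ℚ) • w ^ 3)
      + (t ^ 6 - (35 / 4 : ℚ) • (w * t ^ 4) + (259 / 16 : ℚ) • (w ^ 2 * t ^ 2)
        - (225 / 64 : ℚ) • w ^ 3) * s = 0 := by
  have st' : s * t = T - t * s := eq_sub_of_add_eq st
  have gt' : g * t = -(t * g) := eq_neg_of_add_eq_zero_left gt
  have Tt' : T * t = w * s - t * g - t * T := by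
    rw [eq_sub_of_add_eq Tt, gt']; abel
  have e1 (x : B) : s * (t * x) = T * x - t * (s * x) := by
    rw [← mul_assoc, st', sub_mul, mul_assoc]
  have e2 (x : B) : g * (t * x) = -(t * (g * x)) := by
    rw [← mul_assoc, gt', neg_mul, mul_assoc]
  have e3 (x : B) : T * (t * x) = w * (s * x) - t * (g * x) - t * (T * x) := by
    rw [← mul_assoc, Tt']; simp only [sub_mul, mul_assoc]
  have c1 (x : B) : t * (w * x) = w * (t * x) := wt.symm.left_comm x
  have c2 (x : B) : s * (w * x) = w * (s * x) := ws.symm.left_comm x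
  have c4 (x : B) : g * (w * x) = w * (g * x) := wg.symm.left_comm x
  have d0 := congrArg D h0
  have d1 := congrArg D h1
  have d2 := congrArg D h2
  have d3 := congrArg D h3
  have D_t' : D t = s := by simpa [D_one] using D_t 1
  simp only [pow_succ, pow_zero, one_mul, mul_assoc, map_zero, D_t, D_w, D_t', mul_sub,
    mul_neg, mul_smul_comm, mul_add, smul_sub, smul_neg, sub_mul, add_mul, smul_mul_assoc,
    st', gt', Tt', e1, e2, e3, c1, c2, c4, wt.symm.eq, ws.symm.eq] at d0 d1 d2 d3 ⊢
  linear_combination (norm := module) (2 / 7 : ℚ) • d0 - (5 / 2 : ℚ) • d1 + (37 / 8 : ℚ) • d2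
    - (225 / 224 : ℚ) • d3

theorem pair_sum_sq {B : Type*} [Ring B] [Algebra ℚ B] {p q r : B} (hp : p * p = 0)
    (hq : q * q = 0) (hr : r * r = 0) (qp : q * p = p * q) (rp : r * p = p * r)
    (rq : r * q = q * r) :
    ((2 : ℚ) • (p + q + r)) ^ 2 = (8 : ℚ) • (p * q + p * r + q * r) := by
  simp only [pow_two, smul_mul_assoc, mul_smul_comm, add_mul, mul_add, hp, hq, hr, qp, rp, rq]
  module

theorem pair_sum_cube {B : Type*} [Ring B] [Algebra ℚ B] {p q r : B} (hp : p * p = 0)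
    (hq : q * q = 0) (hr : r * r = 0) (qp : q * p = p * q) (rp : r * p = p * r)
    (rq : r * q = q * r) :
    ((2 : ℚ) • (p + q + r)) ^ 3 = (48 : ℚ) • (p * q * r) := by
  have h (a b : B) (hb : b * b = 0) : a * b * b = 0 := by rw [mul_assoc, hb, mul_zero]
  have e1 : p * q * p = 0 := by rw [mul_assoc, qp, ← mul_assoc, hp, zero_mul]
  have e2 : p * r * p = 0 := by rw [mul_assoc, rp, ← mul_assoc, hp, zero_mul]
  have e3 : q * r * q = 0 := by rw [mul_assoc, rq, ← mul_assoc, hq, zero_mul]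
  have e4 : p * r * q = p * q * r := by rw [mul_assoc, rq, mul_assoc]
  have e5 : q * r * p = p * q * r := by rw [mul_assoc, rp, ← mul_assoc, qp]
  rw [_root_.pow_succ, pair_sum_sq hp hq hr qp rp rq]
  simp only [smul_mul_assoc, mul_smul_comm, add_mul, mul_add, h _ _ hq, h _ _ hr, e1, e2, e3, e4,
    e5]
  module

theorem pair_sum_anticomm {B : Type*} [Ring B] [Algebra ℚ B]
    (t w s T g p q r pq pr qr x x₁ x₂ x₃ y₁ y₂ y₃ z : B) (D : B →ₗ[ℚ] B)
    (wt : Commute w t) (ws : Commute w s) (wg : Commute w g)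
    (st : s * t + t * s = T) (Tt : T * t + t * T = w * s + g * t) (gt : g * t + t * g = 0)
    (D_one : D 1 = 0) (D_t : ∀ x, D (t * x) = s * x - t * D x)
    (D_w : ∀ x, D (w * x) = w * D x - 2 • (g * x))
    (hw : w = (2 : ℚ) • (p + q + r)) (hp : p * p = 0) (hq : q * q = 0) (hr : r * r = 0)
    (qp : q * p = p * q) (rp : r * p = p * r) (rq : r * q = q * r)
    (hpq : p * q = pq) (hpr : p * r = pr) (hqr : q * r = qr)
    (hx : t ^ 6 = x) (hx₁ : t ^ 4 * r = x₁) (hx₂ : t ^ 4 * q = x₂) (hx₃ : t ^ 4 * p = x₃)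
    (hy₁ : t ^ 2 * qr = y₁) (hy₂ : t ^ 2 * pr = y₂) (hy₃ : t ^ 2 * pq = y₃) (hz : p * q * r = z)
    (tx : t * x = 0) (tx₁ : t * x₁ = 0) (tx₂ : t * x₂ = 0) (tx₃ : t * x₃ = 0)
    (ty₁ : t * y₁ = 0) (ty₂ : t * y₂ = 0) (ty₃ : t * y₃ = 0) (tz : t * z = 0) :
    s * (x - (35 / 2 : ℚ) • (x₁ + x₂ + x₃) + (259 / 2 : ℚ) • (y₁ + y₂ + y₃) - (675 / 4 : ℚ) • z)
      + (x - (35 / 2 : ℚ) • (x₁ + x₂ + x₃) + (259 / 2 : ℚ) • (y₁ + y₂ + y₃)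
        - (675 / 4 : ℚ) • z) * s = 0 := by
  have e4 : w * t ^ 4 = (2 : ℚ) • (x₁ + x₂ + x₃) := by
    rw [(wt.pow_right 4).eq, hw, mul_smul_comm, mul_add, mul_add, hx₁, hx₂, hx₃]
    abel_nf
  have e2 : w ^ 2 * t ^ 2 = (8 : ℚ) • (y₁ + y₂ + y₃) := by
    rw [((wt.pow_right 2).pow_left 2).eq, hw, pair_sum_sq hp hq hr qp rp rq, mul_smul_comm,
      mul_add, mul_add, hpq, hpr, hqr, hy₁, hy₂, hy₃]
    abel_nf
  have e0 : w ^ 3 = (48 : ℚ) • z := by rw [hw, pair_sum_cube hp hq hr qp rp rq, hz]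
  have key := anticomm_of_antiderivation t w s T g D wt ws wg st Tt gt D_one D_t D_w
    (by rw [hx, tx]) (by simp [e4, mul_add, tx₁, tx₂, tx₃])
    (by simp [e2, mul_add, ty₁, ty₂, ty₃]) (by simp [e0, tz])
  rw [hx, e4, e2, e0] at key
  simp only [smul_smul] at key
  norm_num1 at key
  exact key

open ExteriorAlgebra in
theorem commute_ι_mul_ι {M : Type*} [AddCommGroup M] [Module ℚ M] (x y z : M) :
    Commute (ι ℚ x * ι ℚ y) (ι ℚ z) := by
  have h1 := eq_neg_of_add_eq_zero_left (ι_add_mul_swap (R := ℚ) y z)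
  have h2 := eq_neg_of_add_eq_zero_left (ι_add_mul_swap (R := ℚ) x z)
  rw [commute_iff_eq, mul_assoc, h1, mul_neg, ← mul_assoc, h2, neg_mul, neg_neg, mul_assoc]

/-- The antisymmetrized product of a finite family in a ring. -/
def altProd {A : Type*} [Ring A] {p : ℕ} (u : Fin p → A) : A :=
  ∑ s : Equiv.Perm (Fin p), (Equiv.Perm.sign s : ℤ) • (List.ofFn fun i => u (s i)).prod

theorem prod_ofFn_tmul {R A B : Type*} [CommRing R] [Ring A] [Algebra R A] [Ring B] [Algebra R B]
    {p : ℕ} (a : Fin p → A) (b : Fin p → B) :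
    (List.ofFn fun i => a i ⊗ₜ[R] b i).prod = (List.ofFn a).prod ⊗ₜ[R] (List.ofFn b).prod := by
  induction p with
  | zero => simp [Algebra.TensorProduct.one_def]
  | succ p ih =>
    simp only [List.ofFn_succ, List.prod_cons, ih, Algebra.TensorProduct.tmul_mul_tmul]

theorem sum_ι_tmul_pow {M A : Type*} [AddCommGroup M] [Module ℚ M] [Ring A] [Algebra ℚ A]
    {p : ℕ} (v : Fin p → M) (u : Fin p → A) :
    (∑ i, ExteriorAlgebra.ι ℚ (v i) ⊗ₜ[ℚ] u i) ^ p
      = ExteriorAlgebra.ιMulti ℚ p v ⊗ₜ[ℚ] altProd u := by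
  rw [← MultilinearMap.mkPiAlgebraFin_apply_const (R := ℚ), MultilinearMap.map_sum]
  simp only [MultilinearMap.mkPiAlgebraFin_apply, prod_ofFn_tmul,
    ← ExteriorAlgebra.ιMulti_apply]
  have h0 (r : Fin p → Fin p) (hr : ¬ r.Bijective) :
      ExteriorAlgebra.ιMulti ℚ p (fun i => v (r i)) = 0 := by
    refine AlternatingMap.map_eq_zero_of_not_injective _ _ fun h => hr ?_
    exact Finite.injective_iff_bijective.mp (Function.Injective.of_comp h)
  rw [altProd, TensorProduct.tmul_sum]
  symm
  refine Finset.sum_of_injOn (fun s => (s : Fin p → Fin p)) ?_ (by simp) ?_ ?_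
  · exact fun _ _ _ _ h => DFunLike.coe_injective h
  · intro r _ hr
    rw [h0 r fun h => hr ⟨Equiv.ofBijective r h, by simp⟩, TensorProduct.zero_tmul]
  · intro s _
    have := (ExteriorAlgebra.ιMulti ℚ p (M := M)).map_perm v s
    rw [Function.comp_def] at this
    rw [this, TensorProduct.tmul_smul, Units.smul_def, TensorProduct.smul_tmul']

theorem pow_mul_eq_pow_mul {A : Type*} [Monoid A] {x y z : A} (h : x * z = y * z)
    (hc : Commute y z) (k : ℕ) : x ^ k * z = y ^ k * z := by
  induction k with
  | zero => simp
  | succ k ih =>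
    rw [_root_.pow_succ', mul_assoc, ih, (hc.pow_left k).eq, ← mul_assoc, h, mul_assoc,
      ← (hc.pow_left k).eq, ← mul_assoc, ← _root_.pow_succ' y k]

/-- The derivative with respect to the `a`-th Grassmann generator. -/
def grassmannDeriv {J : Type*} (A : Type*) [Ring A] [Algebra ℚ A] (a : J) :
    ExteriorAlgebra ℚ (J → ℚ) ⊗[ℚ] A →ₗ[ℚ] ExteriorAlgebra ℚ (J → ℚ) ⊗[ℚ] A :=
  LinearMap.rTensor A (CliffordAlgebra.contractLeft (Q := 0) (LinearMap.proj a))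

theorem grassmannDeriv_one {J A : Type*} [Ring A] [Algebra ℚ A] (a : J) :
    grassmannDeriv A a 1 = 0 := by
  rw [Algebra.TensorProduct.one_def, grassmannDeriv, LinearMap.rTensor_tmul,
    CliffordAlgebra.contractLeft_one, TensorProduct.zero_tmul]

section Grassmann

variable {J : Type*} [DecidableEq J]

/-- The standard generators of the Grassmann algebra on `J`. -/
def grassmannGen (j : J) : ExteriorAlgebra ℚ (J → ℚ) := ExteriorAlgebra.ι ℚ (Pi.single j 1)

theorem grassmannGen_sq (i : J) : grassmannGen i * grassmannGen i = 0 :=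
  ExteriorAlgebra.ι_sq_zero _

theorem grassmannGen_swap (i j : J) :
    grassmannGen i * grassmannGen j = -(grassmannGen j * grassmannGen i) :=
  eq_neg_of_add_eq_zero_left (ExteriorAlgebra.ι_add_mul_swap _ _)

theorem commute_grassmannGen_mul (i j k : J) :
    Commute (grassmannGen i * grassmannGen j) (grassmannGen k) :=
  commute_ι_mul_ι _ _ _

theorem grassmannDeriv_gen_mul {A : Type*} [Ring A] [Algebra ℚ A] (a j : J) (v : A)
    (x : ExteriorAlgebra ℚ (J → ℚ) ⊗[ℚ] A) :
    grassmannDeriv A a ((grassmannGen j ⊗ₜ[ℚ] v) * x)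
      = (if j = a then (1 ⊗ₜ[ℚ] v) * x else 0)
        - (grassmannGen j ⊗ₜ[ℚ] v) * grassmannDeriv A a x := by
  induction x with
  | zero => simp
  | add x y hx hy =>
    rw [mul_add, map_add, hx, hy, map_add]
    split_ifs <;> noncomm_ring
  | tmul l w =>
    have h : CliffordAlgebra.contractLeft (Q := 0) (LinearMap.proj a) (grassmannGen j * l)
        = (if j = a then (1 : ℚ) else 0) • l
          - grassmannGen j * CliffordAlgebra.contractLeft (Q := 0) (LinearMap.proj a) l := by
      rw [grassmannGen, ExteriorAlgebra.ι, CliffordAlgebra.contractLeft_ι_mul]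
      simp [Pi.single_apply, eq_comm]
    simp only [grassmannDeriv, Algebra.TensorProduct.tmul_mul_tmul, LinearMap.rTensor_tmul, h]
    split_ifs <;> simp [TensorProduct.sub_tmul, TensorProduct.neg_tmul]

variable [Fintype J] {A : Type*} [Ring A] [Algebra ℚ A]

/-- The generic element `∑ θⱼ uⱼ` with Grassmann coefficients. -/
def grassmannSum (u : J → A) : ExteriorAlgebra ℚ (J → ℚ) ⊗[ℚ] A :=
  ∑ j, grassmannGen j ⊗ₜ[ℚ] u j

theorem grassmannSum_pow_mul (u : J → A) {p : ℕ} (b : Fin p → J) (hb : Function.Injective b)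
    (P : ExteriorAlgebra ℚ (J → ℚ)) (hP : ∀ j, j ∉ Set.range b → grassmannGen j * P = 0)
    (hc : ∀ j, Commute P (grassmannGen j)) :
    grassmannSum u ^ p * (P ⊗ₜ[ℚ] 1)
      = ((List.ofFn fun i => grassmannGen (b i)).prod * P) ⊗ₜ[ℚ] altProd (u ∘ b) := by
  have h : grassmannSum u * (P ⊗ₜ[ℚ] (1 : A))
      = (∑ i, grassmannGen (b i) ⊗ₜ[ℚ] u (b i)) * (P ⊗ₜ[ℚ] (1 : A)) := by
    rw [grassmannSum, Finset.sum_mul, Finset.sum_mul]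
    symm
    refine Finset.sum_of_injOn b hb.injOn (by simp) ?_ (by simp)
    intro j _ hj
    rw [Algebra.TensorProduct.tmul_mul_tmul, hP j (by simpa using hj), TensorProduct.zero_tmul]
  have hc' : Commute (∑ i, grassmannGen (b i) ⊗ₜ[ℚ] u (b i)) (P ⊗ₜ[ℚ] (1 : A)) := by
    refine Commute.sum_left _ _ _ fun i _ => ?_
    rw [commute_iff_eq, Algebra.TensorProduct.tmul_mul_tmul, Algebra.TensorProduct.tmul_mul_tmul,
      (hc _).eq, mul_one, one_mul]
  rw [pow_mul_eq_pow_mul h hc']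
  have := sum_ι_tmul_pow (fun i => (Pi.single (b i) 1 : J → ℚ)) (u ∘ b)
  rw [ExteriorAlgebra.ιMulti_apply] at this
  change (∑ i, ExteriorAlgebra.ι ℚ (Pi.single (b i) 1 : J → ℚ) ⊗ₜ[ℚ] (u ∘ b) i) ^ p * _ = _
  rw [this, Algebra.TensorProduct.tmul_mul_tmul, mul_one]
  rfl

theorem grassmannSum_pow (u : J → A) {p : ℕ} (b : Fin p → J) (hb : Function.Bijective b) :
    grassmannSum u ^ p = (List.ofFn fun i => grassmannGen (b i)).prod ⊗ₜ[ℚ] altProd (u ∘ b) := by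
  have h := grassmannSum_pow_mul u b hb.1 1 (fun j hj => absurd (hb.2 j) hj)
    fun j => Commute.one_left _
  rwa [← Algebra.TensorProduct.one_def, mul_one, mul_one] at h

theorem grassmannSum_mul_eq_zero (u : J → A) {l : ExteriorAlgebra ℚ (J → ℚ)}
    (hl : ∀ j, grassmannGen j * l = 0) (x : A) : grassmannSum u * (l ⊗ₜ[ℚ] x) = 0 := by
  rw [grassmannSum, Finset.sum_mul]
  refine Finset.sum_eq_zero fun j _ => ?_
  rw [Algebra.TensorProduct.tmul_mul_tmul, hl, TensorProduct.zero_tmul]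

/-- The metric contracted with two Grassmann generators. -/
def grassmannForm (A : Type*) [Ring A] [Algebra ℚ A] (g : J → J → ℚ) :
    ExteriorAlgebra ℚ (J → ℚ) ⊗[ℚ] A :=
  ∑ c, ∑ b, g b c • ((grassmannGen c * grassmannGen b) ⊗ₜ[ℚ] 1)

/-- The metric contracted with one Grassmann generator. -/
def grassmannContr (A : Type*) [Ring A] [Algebra ℚ A] (g : J → J → ℚ) (a : J) :
    ExteriorAlgebra ℚ (J → ℚ) ⊗[ℚ] A :=
  ∑ c, g a c • (grassmannGen c ⊗ₜ[ℚ] 1)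

theorem commute_grassmannForm (g : J → J → ℚ) (l : ExteriorAlgebra ℚ (J → ℚ)) (v : A)
    (hl : ∀ b c, Commute (grassmannGen c * grassmannGen b) l) :
    Commute (grassmannForm A g) (l ⊗ₜ[ℚ] v) := by
  refine Commute.sum_left _ _ _ fun c _ => Commute.sum_left _ _ _ fun b _ => ?_
  refine Commute.smul_left ?_ _
  rw [commute_iff_eq, Algebra.TensorProduct.tmul_mul_tmul, Algebra.TensorProduct.tmul_mul_tmul,
    (hl b c).eq, mul_one, one_mul]

theorem grassmannDeriv_sum_mul (u : J → A) (a : J) (x : ExteriorAlgebra ℚ (J → ℚ) ⊗[ℚ] A) :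
    grassmannDeriv A a (grassmannSum u * x)
      = (1 ⊗ₜ[ℚ] u a) * x - grassmannSum u * grassmannDeriv A a x := by
  simp only [grassmannSum, Finset.sum_mul, map_sum, grassmannDeriv_gen_mul,
    Finset.sum_sub_distrib, Finset.sum_ite_eq', Finset.mem_univ, if_true]

theorem grassmannDeriv_form_mul (g : J → J → ℚ) (hg : ∀ a b, g b a = -g a b) (a : J)
    (x : ExteriorAlgebra ℚ (J → ℚ) ⊗[ℚ] A) :
    grassmannDeriv A a (grassmannForm A g * x)
      = grassmannForm A g * grassmannDeriv A a x - 2 • (grassmannContr A g a * x) := by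
  have e (c b : J) : (grassmannGen c * grassmannGen b) ⊗ₜ[ℚ] (1 : A)
      = (grassmannGen c ⊗ₜ[ℚ] 1) * (grassmannGen b ⊗ₜ[ℚ] 1) := by
    rw [Algebra.TensorProduct.tmul_mul_tmul, mul_one]
  have h1 : ∑ c, ∑ b, g b c • (if c = a then (1 ⊗ₜ[ℚ] (1 : A)) *
      ((grassmannGen b ⊗ₜ[ℚ] (1 : A)) * x) else 0) = - (grassmannContr A g a * x) := by
    rw [Finset.sum_comm]
    simp only [smul_ite, smul_zero, Finset.sum_ite_eq', Finset.mem_univ, if_true, grassmannContr,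
      Finset.sum_mul, ← Finset.sum_neg_distrib, ← Algebra.TensorProduct.one_def, one_mul,
      smul_mul_assoc]
    exact Finset.sum_congr rfl fun b _ => by rw [hg, neg_smul]
  have h2 : ∑ c, ∑ b, g b c • ((grassmannGen c ⊗ₜ[ℚ] (1 : A)) *
      (if b = a then (1 ⊗ₜ[ℚ] (1 : A)) * x else 0)) = grassmannContr A g a * x := by
    simp only [mul_ite, mul_zero, smul_ite, smul_zero, Finset.sum_ite_eq', Finset.mem_univ,
      if_true, grassmannContr, Finset.sum_mul, ← Algebra.TensorProduct.one_def, one_mul,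
      smul_mul_assoc]
  simp only [grassmannForm, e, Finset.sum_mul, map_sum, smul_mul_assoc, map_smul, mul_assoc,
    grassmannDeriv_gen_mul, mul_sub, smul_sub, Finset.sum_sub_distrib, h1, h2]
  abel

theorem grassmannContr_anticomm (g : J → J → ℚ) (u : J → A) (a : J) :
    grassmannContr A g a * grassmannSum u + grassmannSum u * grassmannContr A g a = 0 := by
  simp only [grassmannContr, grassmannSum, Finset.sum_mul, Finset.mul_sum, smul_mul_assoc,
    mul_smul_comm, Algebra.TensorProduct.tmul_mul_tmul, mul_one, one_mul]
  rw [Finset.sum_comm]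
  simp only [Finset.smul_sum, ← Finset.sum_add_distrib]
  refine Finset.sum_eq_zero fun i _ => Finset.sum_eq_zero fun j _ => ?_
  rw [← smul_add, ← TensorProduct.add_tmul, grassmannGen_swap i j]
  simp

theorem grassmannSum_triple (g : J → J → ℚ) (u : J → A)
    (h : ∀ a b c, (u a * u b + u b * u a) * u c
      = u c * (u a * u b + u b * u a) - g a c • u b - g b c • u a) (a : J) :
    (∑ b, grassmannGen b ⊗ₜ[ℚ] (u b * u a + u a * u b)) * grassmannSum u
      + grassmannSum u * (∑ b, grassmannGen b ⊗ₜ[ℚ] (u b * u a + u a * u b))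
      = grassmannForm A g * (1 ⊗ₜ[ℚ] u a) + grassmannContr A g a * grassmannSum u := by
  simp only [grassmannContr, grassmannSum, grassmannForm, Finset.sum_mul, Finset.mul_sum,
    smul_mul_assoc, Algebra.TensorProduct.tmul_mul_tmul, mul_one, one_mul]
  rw [add_comm, Finset.sum_comm, Finset.sum_comm (f := fun b c => g a c • _)]
  simp only [← Finset.sum_add_distrib]
  refine Finset.sum_congr rfl fun c _ => Finset.sum_congr rfl fun b _ => ?_
  rw [h, grassmannGen_swap b c]
  simp only [TensorProduct.neg_tmul, TensorProduct.tmul_sub, TensorProduct.tmul_smul, add_comm]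
  module

end Grassmann

section Six

/-- The product of the conjugate Grassmann generators `θᵢ` and `θᵢ₊₃`. -/
def grassmannPair (i : Fin 3) : ExteriorAlgebra ℚ (Fin (2 * 3) → ℚ) :=
  grassmannGen (Fin.castAdd 3 i : Fin (3 + 3)) * grassmannGen (Fin.natAdd 3 i : Fin (3 + 3))

theorem commute_grassmannPair_gen (i : Fin 3) (j : Fin (2 * 3)) :
    Commute (grassmannPair i) (grassmannGen j) :=
  commute_grassmannGen_mul _ _ _

theorem commute_grassmannPair (i j : Fin 3) : Commute (grassmannPair i) (grassmannPair j) :=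
  (commute_grassmannPair_gen _ _).mul_right (commute_grassmannPair_gen _ _)

theorem gen_mul_grassmannPair (i : Fin 3) (j : Fin (2 * 3)) (h : j.val % 3 = i.val) :
    grassmannGen j * grassmannPair i = 0 := by
  have h' : j = (Fin.castAdd 3 i : Fin (3 + 3)) ∨ j = (Fin.natAdd 3 i : Fin (3 + 3)) := by
    revert h; revert i j; decide
  rcases h' with rfl | rfl
  · rw [grassmannPair, ← mul_assoc, grassmannGen_sq, zero_mul]
  · rw [← (commute_grassmannPair_gen _ _).eq, grassmannPair, mul_assoc, grassmannGen_sq, mul_zero]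

theorem grassmannPair_sq (i : Fin 3) : grassmannPair i * grassmannPair i = 0 := by
  conv_lhs => enter [1]; rw [grassmannPair]
  rw [mul_assoc, gen_mul_grassmannPair i, mul_zero]
  revert i; decide

/-- The product of all six Grassmann generators. -/
def grassmannTop : ExteriorAlgebra ℚ (Fin (2 * 3) → ℚ) :=
  grassmannPair 0 * grassmannPair 1 * grassmannPair 2

theorem gen_mul_mul_pair {P : ExteriorAlgebra ℚ (Fin (2 * 3) → ℚ)} (j : Fin (2 * 3))
    (h : grassmannGen j * P = 0) (i : Fin 3) : grassmannGen j * (P * grassmannPair i) = 0 := by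
  rw [← mul_assoc, h, zero_mul]

theorem gen_mul_pair_mul {P : ExteriorAlgebra ℚ (Fin (2 * 3) → ℚ)} (j : Fin (2 * 3))
    (h : grassmannGen j * P = 0) (i : Fin 3) : grassmannGen j * (grassmannPair i * P) = 0 := by
  rw [← mul_assoc, ← (commute_grassmannPair_gen i j).eq, mul_assoc, h, mul_zero]

theorem gen_mul_grassmannTop (j : Fin (2 * 3)) : grassmannGen j * grassmannTop = 0 := by
  have h : j.val % 3 = (0 : Fin 3).val ∨ j.val % 3 = (1 : Fin 3).val
      ∨ j.val % 3 = (2 : Fin 3).val := by revert j; decide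
  rcases h with h | h | h
  · exact gen_mul_mul_pair _ (gen_mul_mul_pair _ (gen_mul_grassmannPair _ _ h) _) _
  · exact gen_mul_mul_pair _ (gen_mul_pair_mul _ (gen_mul_grassmannPair _ _ h) _) _
  · rw [grassmannTop, mul_assoc]
    exact gen_mul_pair_mul _ (gen_mul_pair_mul _ (gen_mul_grassmannPair _ _ h) _) _

theorem grassmannTop_eq_prod : grassmannTop
    = (List.ofFn fun i => grassmannGen ((![0, 3, 1, 4, 2, 5] : Fin 6 → Fin (2 * 3)) i)).prod := by
  simp only [List.ofFn_succ, List.ofFn_zero, List.prod_cons, List.prod_nil, mul_one,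
    grassmannTop, grassmannPair, mul_assoc]
  rfl

variable {A : Type*} [Ring A] [Algebra ℚ A]

theorem grassmannTop_tmul_eq_zero {x : A} (h : grassmannTop ⊗ₜ[ℚ] x = 0) : x = 0 := by
  let f : (Fin (2 * 3) → ℚ) [⋀^Fin 6]→ₗ[ℚ] ℚ :=
    Matrix.detRowAlternating.compLinearMap (LinearMap.funLeft ℚ ℚ ![0, 3, 1, 4, 2, 5])
  let coeff := ExteriorAlgebra.liftAlternating (R := ℚ) (Pi.single (M := fun n =>
    (Fin (2 * 3) → ℚ) [⋀^Fin n]→ₗ[ℚ] ℚ) 6 f)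
  have htop : grassmannTop = ExteriorAlgebra.ιMulti ℚ 6
      (fun i => (Pi.single ((![0, 3, 1, 4, 2, 5] : Fin 6 → Fin (2 * 3)) i) 1 :
        Fin (2 * 3) → ℚ)) := by
    rw [ExteriorAlgebra.ιMulti_apply, grassmannTop_eq_prod]
    rfl
  have hcoeff : coeff grassmannTop = 1 := by
    rw [htop, ExteriorAlgebra.liftAlternating_apply_ιMulti, Pi.single_eq_same]
    change Matrix.det (n := Fin 6) (R := ℚ) _ = 1
    refine Eq.trans (congrArg Matrix.det (?_ : _ = (1 : Matrix (Fin 6) (Fin 6) ℚ))) Matrix.det_one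
    ext i j
    rw [Matrix.one_apply]
    exact (Pi.single_apply _ _ _).trans (if_congr (by revert i j; decide) rfl rfl)
  have := congrArg (TensorProduct.lid ℚ A ∘ LinearMap.rTensor A coeff) h
  simpa [hcoeff] using this

theorem grassmannSum_pow_six (u : Fin (2 * 3) → A) :
    grassmannSum u ^ 6 = grassmannTop ⊗ₜ[ℚ] altProd (u ∘ ![0, 3, 1, 4, 2, 5]) :=
  (grassmannSum_pow u (![0, 3, 1, 4, 2, 5] : Fin 6 → Fin (2 * 3)) (by decide)).trans
    (congrArg (· ⊗ₜ[ℚ] altProd (u ∘ ![0, 3, 1, 4, 2, 5])) grassmannTop_eq_prod.symm)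

theorem grassmannSum_pow_four_mul (u : Fin (2 * 3) → A) (i j k : Fin 3)
    (h : grassmannPair i * grassmannPair j * grassmannPair k = grassmannTop)
    (b : Fin 4 → Fin (2 * 3)) (hb : b = ![Fin.castAdd 3 i, Fin.natAdd 3 i, Fin.castAdd 3 j,
      Fin.natAdd 3 j])
    (hinj : b.Injective) (hk : ∀ l, l ∉ Set.range b → l.val % 3 = k.val) :
    grassmannSum u ^ 4 * (grassmannPair k ⊗ₜ[ℚ] 1) = grassmannTop ⊗ₜ[ℚ] altProd (u ∘ b) := by
  rw [grassmannSum_pow_mul u b hinj _ (fun l hl => gen_mul_grassmannPair _ _ (hk l hl))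
    (commute_grassmannPair_gen k), ← h]
  congr 2
  subst hb
  simp only [List.ofFn_succ, List.ofFn_zero, List.prod_cons, List.prod_nil, mul_one,
      grassmannPair, mul_assoc]
  rfl

theorem grassmannSum_sq_mul (u : Fin (2 * 3) → A) (i j k : Fin 3)
    (h : grassmannPair i * (grassmannPair j * grassmannPair k) = grassmannTop)
    (b : Fin 2 → Fin (2 * 3)) (hb : b = ![Fin.castAdd 3 i, Fin.natAdd 3 i])
    (hinj : b.Injective)
    (hk : ∀ l, l ∉ Set.range b → l.val % 3 = j.val ∨ l.val % 3 = k.val) :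
    grassmannSum u ^ 2 * ((grassmannPair j * grassmannPair k) ⊗ₜ[ℚ] 1)
      = grassmannTop ⊗ₜ[ℚ] altProd (u ∘ b) := by
  rw [grassmannSum_pow_mul u b hinj _ ?_ fun l => (commute_grassmannPair_gen j l).mul_left
    (commute_grassmannPair_gen k l), ← h]
  · congr 2
    subst hb
    simp only [List.ofFn_succ, List.ofFn_zero, List.prod_cons, List.prod_nil, mul_one]
    rfl
  · intro l hl
    rcases hk l hl with hl | hl
    · exact gen_mul_mul_pair _ (gen_mul_grassmannPair _ _ hl) _
    · exact gen_mul_pair_mul _ (gen_mul_grassmannPair _ _ hl) _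

theorem grassmannForm_gmat : grassmannForm A (gmat 3)
    = (2 : ℚ) • (grassmannPair 0 ⊗ₜ[ℚ] 1 + grassmannPair 1 ⊗ₜ[ℚ] 1 + grassmannPair 2 ⊗ₜ[ℚ] 1) := by
  have h (i j : Fin (2 * 3)) : (grassmannGen i * grassmannGen j) ⊗ₜ[ℚ] (1 : A)
      = -((grassmannGen j * grassmannGen i) ⊗ₜ[ℚ] 1) := by
    rw [grassmannGen_swap, TensorProduct.neg_tmul]
  have e : grassmannForm A (gmat 3) = ∑ i : Fin 3, (2 : ℚ) • (grassmannPair i ⊗ₜ[ℚ] (1 : A)) := by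
    have e' (f : Fin (2 * 3) → ExteriorAlgebra ℚ (Fin (2 * 3) → ℚ) ⊗[ℚ] A) :
        ∑ i, f i = ∑ i : Fin 3, (f (Fin.castAdd 3 i : Fin (3 + 3))
          + f (Fin.natAdd 3 i : Fin (3 + 3))) := by
      rw [Finset.sum_add_distrib]; exact Fin.sum_univ_add (a := 3) (b := 3) f
    have g1 (i j : Fin 3) : gmat 3 (Fin.castAdd 3 i : Fin (3 + 3)) (Fin.castAdd 3 j : Fin (3 + 3))
        = 0 := by revert i j; decide
    have g2 (i j : Fin 3) : gmat 3 (Fin.natAdd 3 i : Fin (3 + 3)) (Fin.natAdd 3 j : Fin (3 + 3))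
        = 0 := by revert i j; decide
    have g3 (i j : Fin 3) : gmat 3 (Fin.castAdd 3 i : Fin (3 + 3)) (Fin.natAdd 3 j : Fin (3 + 3))
        = if i = j then -1 else 0 := by revert i j; decide
    have g4 (i j : Fin 3) : gmat 3 (Fin.natAdd 3 i : Fin (3 + 3)) (Fin.castAdd 3 j : Fin (3 + 3))
        = if i = j then 1 else 0 := by revert i j; decide
    simp only [grassmannForm, e', g1, g2, g3, g4, zero_smul, zero_add, add_zero, ite_smul,
      Finset.sum_ite_eq', Finset.mem_univ, if_true]
    refine Finset.sum_congr rfl fun i _ => ?_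
    rw [h (Fin.natAdd 3 i : Fin (3 + 3)), grassmannPair]
    module
  rw [e, Fin.sum_univ_three]
  rw [smul_add, smul_add]

theorem gmat_antisymm (n : ℕ) (a b : Fin (2 * n)) : gmat n b a = -gmat n a b := by
  simp only [gmat]
  split_ifs <;> first | omega | simp

/-- The Scasimir element built from a family of odd generators. -/
def scasimir (u : Fin (2 * 3) → A) : A :=
  altProd (u ∘ ![0, 3, 1, 4, 2, 5])
  - ((35 : ℚ) / 2) • (altProd (u ∘ ![0, 3, 1, 4]) + altProd (u ∘ ![0, 3, 2, 5])
      + altProd (u ∘ ![1, 4, 2, 5]))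
  + ((259 : ℚ) / 2) • (altProd (u ∘ ![0, 3]) + altProd (u ∘ ![1, 4]) + altProd (u ∘ ![2, 5]))
  - ((675 : ℚ) / 4) • 1

theorem scasimir_anticomm (u : Fin (2 * 3) → A)
    (h : ∀ a b c, (u a * u b + u b * u a) * u c
      = u c * (u a * u b + u b * u a) - gmat 3 a c • u b - gmat 3 b c • u a) (a : Fin (2 * 3)) :
    u a * scasimir u + scasimir u * u a = 0 := by
  have c (i j : Fin 3) := (commute_grassmannPair i j).eq
  have tm (l m : ExteriorAlgebra ℚ (Fin (2 * 3) → ℚ)) :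
      (l ⊗ₜ[ℚ] (1 : A)) * (m ⊗ₜ[ℚ] 1) = (l * m) ⊗ₜ[ℚ] 1 := by
    rw [Algebra.TensorProduct.tmul_mul_tmul, mul_one]
  have tsq (i : Fin 3) : (grassmannPair i ⊗ₜ[ℚ] (1 : A)) * (grassmannPair i ⊗ₜ[ℚ] 1) = 0 := by
    rw [tm, grassmannPair_sq, TensorProduct.zero_tmul]
  have tc (i j : Fin 3) : (grassmannPair i ⊗ₜ[ℚ] (1 : A)) * (grassmannPair j ⊗ₜ[ℚ] 1)
      = (grassmannPair j ⊗ₜ[ℚ] 1) * (grassmannPair i ⊗ₜ[ℚ] 1) := by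
    rw [tm, tm, c]
  have top_eq1 : grassmannPair 0 * grassmannPair 2 * grassmannPair 1 = grassmannTop := by
    rw [grassmannTop, mul_assoc, c 2 1, mul_assoc]
  have top_eq2 : grassmannPair 1 * grassmannPair 2 * grassmannPair 0 = grassmannTop := by
    rw [mul_assoc, c 2 0, ← mul_assoc, c 1 0, grassmannTop]
  have wgen (j : Fin (2 * 3)) (v : A) :
      Commute (grassmannForm A (gmat 3)) (grassmannGen j ⊗ₜ[ℚ] v) :=
    commute_grassmannForm _ _ _ fun _ _ => commute_grassmannGen_mul _ _ _
  have ttop := grassmannSum_mul_eq_zero u gen_mul_grassmannTop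
  have key := pair_sum_anticomm (grassmannSum u) (grassmannForm A (gmat 3)) (1 ⊗ₜ[ℚ] u a)
    (∑ b, grassmannGen b ⊗ₜ[ℚ] (u b * u a + u a * u b)) (grassmannContr A (gmat 3) a)
    (grassmannPair 0 ⊗ₜ[ℚ] 1) (grassmannPair 1 ⊗ₜ[ℚ] 1) (grassmannPair 2 ⊗ₜ[ℚ] 1)
    _ _ _ _ _ _ _ _ _ _
    (grassmannDeriv A a) (Commute.sum_right _ _ _ fun j _ => wgen j _)
    (commute_grassmannForm _ _ _ fun _ _ => Commute.one_right _)
    (Commute.sum_right _ _ _ fun j _ => (wgen j _).smul_right _)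
    (by
      simp only [grassmannSum, Finset.mul_sum, Finset.sum_mul,
        Algebra.TensorProduct.tmul_mul_tmul, one_mul, mul_one, ← Finset.sum_add_distrib,
        ← TensorProduct.tmul_add, add_comm])
    (grassmannSum_triple _ u h a) (grassmannContr_anticomm _ u a) (grassmannDeriv_one a)
    (grassmannDeriv_sum_mul u a) (grassmannDeriv_form_mul _ (gmat_antisymm 3) a)
    grassmannForm_gmat (tsq 0) (tsq 1) (tsq 2) (tc 1 0) (tc 2 0) (tc 2 1)
    (tm _ _) (tm _ _) (tm _ _) (grassmannSum_pow_six u)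
    (grassmannSum_pow_four_mul u 0 1 2 rfl ![0, 3, 1, 4] rfl (by decide) (by decide))
    (grassmannSum_pow_four_mul u 0 2 1 top_eq1 ![0, 3, 2, 5] rfl (by decide) (by decide))
    (grassmannSum_pow_four_mul u 1 2 0 top_eq2 ![1, 4, 2, 5] rfl (by decide) (by decide))
    (grassmannSum_sq_mul u 0 1 2 (mul_assoc _ _ _).symm ![0, 3] rfl (by decide) (by decide))
    (grassmannSum_sq_mul u 1 0 2 (by rw [c 0 2, ← mul_assoc, top_eq2]) ![1, 4] rfl (by decide)
      (by decide))
    (grassmannSum_sq_mul u 2 0 1 (by rw [← mul_assoc, c 2 0, top_eq1]) ![2, 5] rfl (by decide)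
      (by decide))
    (z := grassmannTop ⊗ₜ[ℚ] 1) (by rw [tm, tm]; rfl)
    (ttop _) (ttop _) (ttop _) (ttop _) (ttop _) (ttop _) (ttop _) (ttop _)
  simp only [← TensorProduct.tmul_sub, ← TensorProduct.tmul_add, ← TensorProduct.tmul_smul] at key
  rw [Algebra.TensorProduct.tmul_mul_tmul, Algebra.TensorProduct.tmul_mul_tmul, one_mul,
    mul_one, ← TensorProduct.tmul_add] at key
  exact grassmannTop_tmul_eq_zero key

end Six

theorem σ_relation (n : ℕ) (a b c : Fin (2 * n)) :
    (σ n a * σ n b + σ n b * σ n a) * σ n c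
      = σ n c * (σ n a * σ n b + σ n b * σ n a) - gmat n a c • σ n b - gmat n b c • σ n a := by
  have := RingQuot.mkAlgHom_rel ℚ (OspRel.rel a b c)
  simp only [← Algebra.smul_def, map_mul, map_add, map_sub, map_smul] at this
  exact this

/-- In `U(osp(1|6))`, the Scasimir `Sc3` anticommutes with every fermionic
generator `σₐ`, `a ∈ {1,…,6}`. -/
theorem stmt8 : ∀ a : Fin (2*3), σ 3 a * Sc3 + Sc3 * σ 3 a = 0 :=
  scasimir_anticomm (σ 3) (σ_relation 3)

end
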